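/- arXiv:2012.13471 — 2 statements merged into one kernel-verified Lean document; each statement's English description precedes it below -/
import Mathlib

section
/- Let r, s be coprime integers with 0 ≤ s < r. A positive integer n belongs to N_θ if and only if there exist rational numbers u, v, w, x, y with 0 < w ≤ n and y·v ≠ 0 such that, setting N = 2n − w, one has y² = x·(x + (r+s)w)·(x − (r−s)w), v² = u·(u − (r+s)N)·(u + (r−s)N), and x·v = u·y. -/
/-- A θ-parallelogram envelope for `n`, where `cos θ = s/r`. -/
def IsEnvelope (r s : ℤ) (n : ℕ) (a b c d e : ℚ) : Prop :=
  0 < a ∧ 0 < b ∧ 0 < c ∧ 0 < d ∧ 0 < e ∧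
  a ^ 2 + b ^ 2 - (2 * (s : ℚ) / (r : ℚ)) * a * b = c ^ 2 ∧
  a ^ 2 + d ^ 2 + (2 * (s : ℚ) / (r : ℚ)) * a * d = e ^ 2 ∧
  a * (b + d) = (r : ℚ) * (n : ℚ)

/-!
An envelope is a triangle with rational sides `c`, `e`, `b + d` and area `r n sin θ / 2`, together
with a cevian of length `a` meeting the side `b + d` at angle `θ`. The points on the two cubics
correspond to the two halves cut off by the cevian: `w = 2ab / r`, both points have slope
`y / x = v / u = 2a`, and `w ≤ n` says that `b ≤ d`. So the theorem amounts to finding, from one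
envelope, another one with `b ≤ d`.

Let `x < y` and `z` be the tangent lengths of the triangle, after a permutation or a deformation as
below in the isosceles case. The triangles of the same area whose first two tangent lengths are
proportional to `x` and `y` correspond to rational points `(ξ, η)` with `0 < ξ` and `0 < η` on a
curve `η² = ξ³ - Aξ` with `0 < A`. Doubling strictly increases the absolute value of the 2-adic
valuation of `A / ξ²`, so there are infinitely many such points. If `ξ` were bounded, two of
them would be arbitrarily close, and the chord through one and the reflection of the other would be
steep enough to produce a point with larger `ξ`. Hence there are triangles in the family with `x`,
`y` arbitrarily large and `z` small, and in these the cevian satisfies `b ≤ d`.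
-/

section TwoAdic

lemma padicValRat_one_add_pos {q : ℚ} (hq : q ≠ 0) (hq' : 1 + q ≠ 0)
    (hval : padicValRat 2 q = 0) : 0 < padicValRat 2 (1 + q) := by
  have hval_eq : padicValNat 2 q.num.natAbs = padicValNat 2 q.den := by
    rw [padicValRat_def, padicValInt] at hval
    omega
  have hdvd : 2 ∣ q.num.natAbs ↔ 2 ∣ q.den := by
    rw [dvd_iff_padicValNat_ne_zero (by simpa using hq), dvd_iff_padicValNat_ne_zero q.den_nz,
      hval_eq]
  have hden : ¬2 ∣ q.den := fun h ↦
    Nat.not_coprime_of_dvd_of_dvd one_lt_two (hdvd.mpr h) h q.reduced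
  have hsum : 1 + q = ((q.num + q.den : ℤ) : ℚ) / q.den := by
    push_cast
    rw [add_div, Rat.num_div_den, div_self (by simp), add_comm]
  have hsum_ne : q.num + (q.den : ℤ) ≠ 0 := fun h ↦ hq' (by rw [hsum, h]; simp)
  rw [hsum, padicValRat.div (mod_cast hsum_ne) (by simp), padicValRat.of_int, padicValRat.of_nat,
    padicValNat.eq_zero_of_not_dvd hden, Nat.cast_zero, sub_zero, Nat.cast_pos, padicValInt]
  exact one_le_padicValNat_of_dvd (by omega) (by omega)

/-- On `y² = x³ - A x`, duplication of a point changes the invariant `A / x²` by this function. -/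
def duplicationMap (α : ℚ) : ℚ := 2 ^ 4 * α * (1 - α) ^ 2 / (1 + α) ^ 4

lemma padicValRat_duplicationMap {α : ℚ} (h₀ : α ≠ 0) (hsub : 1 - α ≠ 0) (hadd : 1 + α ≠ 0) :
    padicValRat 2 (duplicationMap α) =
      4 + padicValRat 2 α + 2 * padicValRat 2 (1 - α) - 4 * padicValRat 2 (1 + α) := by
  have htwo : padicValRat 2 2 = 1 := padicValRat.self one_lt_two
  rw [duplicationMap, padicValRat.div (by positivity) (by positivity),
    padicValRat.mul (by positivity) (by positivity), padicValRat.mul (by positivity) h₀,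
    padicValRat.pow, padicValRat.pow, padicValRat.pow, htwo]
  norm_num

theorem abs_padicValRat_lt_abs_padicValRat_duplicationMap {α : ℚ} (h₀ : α ≠ 0)
    (hsub : 1 - α ≠ 0) (hadd : 1 + α ≠ 0) :
    |padicValRat 2 α| < |padicValRat 2 (duplicationMap α)| := by
  rw [padicValRat_duplicationMap h₀ hsub hadd]
  by_cases hval : padicValRat 2 α = 0
  · have hpos_add := padicValRat_one_add_pos h₀ hadd hval
    have hpos_sub : 0 < padicValRat 2 (1 - α) := by
      rw [sub_eq_add_neg] at hsub ⊢
      exact padicValRat_one_add_pos (neg_ne_zero.mpr h₀) hsub (by rwa [padicValRat.neg])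
    have hmin : min (padicValRat 2 (1 - α)) (padicValRat 2 (1 + α)) ≤ 1 := by
      have htwo : 1 - α + (1 + α) = 2 := by ring
      have h := padicValRat.min_le_padicValRat_add (p := 2) (htwo ▸ two_ne_zero)
      rwa [htwo, show padicValRat 2 2 = 1 from padicValRat.self one_lt_two] at h
    rw [hval, abs_zero, abs_pos]
    omega
  · have hval_add : padicValRat 2 (1 + α) = min 0 (padicValRat 2 α) := by
      rw [padicValRat.add_eq_min hadd one_ne_zero h₀ (by simpa using Ne.symm hval),
        padicValRat.one]
    have hval_sub : padicValRat 2 (1 - α) = min 0 (padicValRat 2 α) := by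
      rw [sub_eq_add_neg] at hsub ⊢
      rw [padicValRat.add_eq_min hsub one_ne_zero (neg_ne_zero.mpr h₀)
        (by simpa using Ne.symm hval), padicValRat.one, padicValRat.neg]
    rw [hval_add, hval_sub]
    grind

lemma duplicationMap_lt_one {α : ℚ} (h₀ : 0 < α) (h₁ : α < 1) : duplicationMap α < 1 := by
  have hne : duplicationMap α ≠ 1 := fun h ↦ by
    have := abs_padicValRat_lt_abs_padicValRat_duplicationMap h₀.ne' (by linarith) (by linarith)
    rw [h, padicValRat.one, abs_zero] at this
    exact this.not_ge (abs_nonneg _)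
  refine lt_of_le_of_ne ?_ hne
  rw [duplicationMap, div_le_one (by positivity)]
  linear_combination sq_nonneg (α ^ 2 - 6 * α + 1)

end TwoAdic

lemma exists_ne_abs_sub_lt_of_infinite {F : Type*} [Field F] [LinearOrder F]
    [IsStrictOrderedRing F] [FloorRing F] {S : Set F} {l u ε : F} (hS : S.Infinite)
    (hSlu : S ⊆ Set.Icc l u) (hε : 0 < ε) : ∃ x ∈ S, ∃ y ∈ S, x ≠ y ∧ |x - y| < ε := by
  have hmaps : Set.MapsTo (fun x ↦ ⌊x / ε⌋) S (Set.Icc ⌊l / ε⌋ ⌊u / ε⌋) := fun x hx ↦ by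
    obtain ⟨hlx, hxu⟩ := hSlu hx
    exact ⟨Int.floor_le_floor (by gcongr), Int.floor_le_floor (by gcongr)⟩
  obtain ⟨x, hx, y, hy, hxy, hfloor⟩ :=
    hS.exists_ne_map_eq_of_mapsTo hmaps (Set.finite_Icc _ _)
  refine ⟨x, hx, y, hy, hxy, ?_⟩
  have := Int.abs_sub_lt_one_of_floor_eq_floor hfloor
  rwa [← sub_div, abs_div, abs_of_pos hε, div_lt_one hε] at this

section EllipticCurve

open WeierstrassCurve

/-- The elliptic curve `y² = x³ - A x`. -/
def congruentCurve (A : ℚ) : Affine ℚ := ⟨0, 0, 0, -A, 0⟩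

lemma congruentCurve_equation_iff {A x y : ℚ} :
    (congruentCurve A).Equation x y ↔ y ^ 2 = x ^ 3 - A * x := by
  rw [Affine.equation_iff]
  simp [congruentCurve, sub_eq_add_neg]

/-- The `x`-coordinates of the rational points of `y² = x³ - A x` that lie on the unbounded real
branch and are not `2`-torsion (for `0 < A`). The sign of `y` is free, and is chosen positive. -/
def unboundedBranch (A : ℚ) : Set ℚ :=
  {x | 0 < x ∧ ∃ y, 0 < y ∧ y ^ 2 = x ^ 3 - A * x}

variable {A x : ℚ}

lemma lt_sq_of_mem_unboundedBranch (hx : x ∈ unboundedBranch A) : A < x ^ 2 := by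
  obtain ⟨hx₀, y, hy, hxy⟩ := hx
  have : 0 < x * (x ^ 2 - A) := by linear_combination hxy + pow_pos hy 2
  linarith [(mul_pos_iff_of_pos_left hx₀).mp this]

lemma mem_unboundedBranch_of_equation {y : ℚ} (hx : 0 < x) (hA : A < x ^ 2)
    (h : (congruentCurve A).Equation x y) : x ∈ unboundedBranch A := by
  rw [congruentCurve_equation_iff] at h
  have hy : y ≠ 0 := by
    rintro rfl
    have : 0 < x * (x ^ 2 - A) := mul_pos hx (sub_pos.mpr hA)
    linarith
  exact ⟨hx, |y|, abs_pos.mpr hy, by rw [sq_abs, h]⟩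

/-- The `x`-coordinate of twice a point of `y² = x³ - A x`. -/
def duplicationX (A x : ℚ) : ℚ := (x ^ 2 + A) ^ 2 / (4 * (x ^ 3 - A * x))

lemma div_duplicationX_sq (hx : x ≠ 0) (hA : x ^ 2 + A ≠ 0) :
    A / duplicationX A x ^ 2 = duplicationMap (A / x ^ 2) := by
  have hadd : 1 + A / x ^ 2 = (x ^ 2 + A) / x ^ 2 := by field_simp
  have hsub : 1 - A / x ^ 2 = (x ^ 2 - A) / x ^ 2 := by field_simp
  have hfactor : x ^ 3 - A * x = x * (x ^ 2 - A) := by ring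
  rw [duplicationX, duplicationMap, hadd, hsub, hfactor]
  field_simp
  ring

lemma duplicationX_mem_unboundedBranch (hA : 0 < A) (hx : x ∈ unboundedBranch A) :
    duplicationX A x ∈ unboundedBranch A := by
  have hAx := lt_sq_of_mem_unboundedBranch hx
  obtain ⟨hx₀, y, hy, hxy⟩ := hx
  have hpos : 0 < duplicationX A x := by
    rw [duplicationX, ← hxy]
    positivity
  refine mem_unboundedBranch_of_equation hpos ?_ (y := (congruentCurve A).addY x x y
      ((congruentCurve A).slope x x y y)) ?_
  · rw [← div_lt_one (by positivity), div_duplicationX_sq hx₀.ne' (by positivity)]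
    exact duplicationMap_lt_one (by positivity) ((div_lt_one (by positivity)).mpr hAx)
  · have hneg : y ≠ (congruentCurve A).negY x y := by
      simp only [Affine.negY, congruentCurve]
      linarith
    have hslope : (congruentCurve A).slope x x y y = (3 * x ^ 2 - A) / (2 * y) := by
      rw [Affine.slope_of_Y_ne rfl hneg]
      simp only [Affine.negY, congruentCurve]
      ring
    have hadd : (congruentCurve A).addX x x ((congruentCurve A).slope x x y y) =
        duplicationX A x := by
      rw [hslope, duplicationX, ← hxy]
      simp only [Affine.addX, congruentCurve]
      field_simp
      linear_combination (-32 * x) * hxy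
    rw [← hadd]
    have heq := congruentCurve_equation_iff.mpr hxy
    exact Affine.equation_add heq heq fun h ↦ hneg h.2

lemma infinite_unboundedBranch (hA : 0 < A) (hne : (unboundedBranch A).Nonempty) :
    (unboundedBranch A).Infinite := fun hfin ↦ by
  obtain ⟨x, hx, hmax⟩ :=
    Set.exists_max_image _ (fun x ↦ |padicValRat 2 (A / x ^ 2)|) hfin hne
  have hAx := (div_lt_one (pow_pos hx.1 2)).mpr (lt_sq_of_mem_unboundedBranch hx)
  have hpos : 0 < A / x ^ 2 := div_pos hA (pow_pos hx.1 2)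
  have hlt := abs_padicValRat_lt_abs_padicValRat_duplicationMap hpos.ne' (by linarith)
    (by linarith)
  rw [← div_duplicationX_sq hx.1.ne' (by positivity)] at hlt
  exact hlt.not_ge (hmax _ (duplicationX_mem_unboundedBranch hA hx))

lemma chord_mem_unboundedBranch {x₁ x₂ y₁ y₂ : ℚ} (hne : x₁ ≠ x₂)
    (h₁ : y₁ ^ 2 = x₁ ^ 3 - A * x₁) (h₂ : y₂ ^ 2 = x₂ ^ 3 - A * x₂)
    (hpos : 0 < ((y₁ - y₂) / (x₁ - x₂)) ^ 2 - x₁ - x₂)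
    (hA : A < (((y₁ - y₂) / (x₁ - x₂)) ^ 2 - x₁ - x₂) ^ 2) :
    ((y₁ - y₂) / (x₁ - x₂)) ^ 2 - x₁ - x₂ ∈ unboundedBranch A := by
  refine mem_unboundedBranch_of_equation hpos hA (y := (congruentCurve A).addY x₁ x₂ y₁
      ((congruentCurve A).slope x₁ x₂ y₁ y₂)) ?_
  have hadd : (congruentCurve A).addX x₁ x₂ ((congruentCurve A).slope x₁ x₂ y₁ y₂) =
      ((y₁ - y₂) / (x₁ - x₂)) ^ 2 - x₁ - x₂ := by
    rw [Affine.slope_of_X_ne hne]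
    simp [Affine.addX, congruentCurve]
  rw [← hadd]
  exact Affine.equation_add (congruentCurve_equation_iff.mpr h₁)
    (congruentCurve_equation_iff.mpr h₂) fun h ↦ hne h.1

lemma sq_le_of_mem_upperBounds_unboundedBranch {B y : ℚ} (hA : 0 < A)
    (hB : B ∈ upperBounds (unboundedBranch A)) (hx : x ∈ unboundedBranch A)
    (hxy : y ^ 2 = x ^ 3 - A * x) : A ^ 2 ≤ 4 * B * y ^ 2 := by
  have hy : 0 < y ^ 2 := by
    obtain ⟨-, z, hz, hxz⟩ := hx
    rw [hxy, ← hxz]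
    positivity
  have hle : duplicationX A x ≤ B := hB (duplicationX_mem_unboundedBranch hA hx)
  rw [duplicationX, ← hxy, div_le_iff₀ (by positivity)] at hle
  have : 0 ≤ x ^ 2 * (x ^ 2 + 2 * A) := by positivity
  linarith

theorem not_bddAbove_unboundedBranch (hA : 0 < A) (hne : (unboundedBranch A).Nonempty) :
    ¬BddAbove (unboundedBranch A) := fun ⟨B, hB⟩ ↦ by
  have hB₀ : 0 < B := hne.elim fun x hx ↦ hx.1.trans_le (hB hx)
  obtain ⟨x₁, hx₁, x₂, hx₂, hx, hclose⟩ := exists_ne_abs_sub_lt_of_infinite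
    (infinite_unboundedBranch hA hne) (fun x hx ↦ ⟨hx.1.le, hB hx⟩)
    (show 0 < A / (4 * B) by positivity)
  have ⟨_, y₁, hy₁, h₁⟩ := hx₁
  have ⟨_, y₂, hy₂, h₂⟩ := hx₂
  have hslope : 3 * B < ((y₁ - -y₂) / (x₁ - x₂)) ^ 2 := by
    have hx_sub : x₁ - x₂ ≠ 0 := sub_ne_zero.mpr hx
    rw [div_pow, lt_div_iff₀ (by positivity)]
    refine lt_of_mul_lt_mul_left ?_ (show 0 ≤ 4 * B by positivity)
    rw [lt_div_iff₀ (by positivity)] at hclose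
    calc 4 * B * (3 * B * (x₁ - x₂) ^ 2) ≤ (|x₁ - x₂| * (4 * B)) ^ 2 := by
          rw [mul_pow, sq_abs]
          linarith [show 0 ≤ B ^ 2 * (x₁ - x₂) ^ 2 by positivity]
      _ < A ^ 2 := by gcongr
      _ ≤ 4 * B * y₁ ^ 2 := sq_le_of_mem_upperBounds_unboundedBranch hA hB hx₁ h₁
      _ ≤ 4 * B * (y₁ - -y₂) ^ 2 := by
          rw [sub_neg_eq_add]
          gcongr
          linarith
  have hlarge : B < ((y₁ - -y₂) / (x₁ - x₂)) ^ 2 - x₁ - x₂ := by linarith [hB hx₁, hB hx₂]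
  refine hlarge.not_ge (hB (chord_mem_unboundedBranch hx h₁ (by rwa [neg_sq])
    (hB₀.trans hlarge) ?_))
  calc A < x₁ ^ 2 := lt_sq_of_mem_unboundedBranch hx₁
    _ ≤ B ^ 2 := by have := hx₁.1; gcongr; exact hB hx₁
    _ < _ := by gcongr

end EllipticCurve

/-- The triangle with sides `y + z`, `z + x`, `x + y` (so that `x`, `y`, `z` are the lengths of the
tangents from its vertices to the incircle) has area `√S`; the last field is Heron's formula. -/
structure TangentTriangle (S x y z : ℚ) : Prop where
  x_pos : 0 < x
  y_pos : 0 < y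
  z_pos : 0 < z
  heron : x * y * z * (x + y + z) = S

namespace TangentTriangle

variable {S x y z : ℚ}

lemma rotate (h : TangentTriangle S x y z) : TangentTriangle S z x y :=
  ⟨h.z_pos, h.x_pos, h.y_pos, by rw [← h.heron]; ring⟩

lemma swap (h : TangentTriangle S x y z) : TangentTriangle S y x z :=
  ⟨h.y_pos, h.x_pos, h.z_pos, by rw [← h.heron]; ring⟩

lemma mem_unboundedBranch (h : TangentTriangle S x y z) :
    (x + y) * (x + y + z) ∈ unboundedBranch ((x + y) ^ 2 * z * (x + y + z)) := by
  obtain ⟨hx, hy, hz, -⟩ := h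
  exact ⟨by positivity, (x + y) ^ 2 * (x + y + z), by positivity, by ring⟩

lemma of_unboundedBranch (h : TangentTriangle S x y z) {ξ η : ℚ} (hξ : 0 < ξ) (hη : 0 < η)
    (hξη : η ^ 2 = ξ ^ 3 - (x + y) ^ 2 * z * (x + y + z) * ξ) :
    TangentTriangle S (η / ((x + y) * ξ) * x) (η / ((x + y) * ξ) * y)
      ((x + y) ^ 2 * z * (x + y + z) / η) := by
  obtain ⟨hx, hy, hz, hS⟩ := h
  refine ⟨by positivity, by positivity, by positivity, ?_⟩
  have hperimeter : η / ((x + y) * ξ) * x + η / ((x + y) * ξ) * y +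
      (x + y) ^ 2 * z * (x + y + z) / η = ξ ^ 2 / η := by
    field_simp
    linear_combination hξη
  rw [hperimeter, ← hS]
  field_simp

lemma exists_scale_gt (h : TangentTriangle S x y z) (T : ℚ) :
    ∃ t z', T < t ∧ z' < 1 ∧ TangentTriangle S (t * x) (t * y) z' := by
  have hp : 0 < x + y := add_pos h.x_pos h.y_pos
  have hA : 0 < (x + y) ^ 2 * z * (x + y + z) := by
    have := h.z_pos
    positivity
  obtain ⟨ξ, hξ_mem, hξ⟩ := not_bddAbove_iff.mp
    (not_bddAbove_unboundedBranch hA ⟨_, h.mem_unboundedBranch⟩)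
    (max ((x + y) ^ 2 * z * (x + y + z)) ((T * (x + y)) ^ 2 + 2))
  obtain ⟨hξ₀, η, hη, hξη⟩ := hξ_mem
  have hnew := h.of_unboundedBranch hξ₀ hη hξη
  generalize (x + y) ^ 2 * z * (x + y + z) = A at *
  obtain ⟨hAξ, hTξ⟩ := max_lt_iff.mp hξ
  have hratio : ξ - 1 < (η / ξ) ^ 2 := by
    rw [div_pow, lt_div_iff₀ (by positivity), hξη]
    linarith [mul_lt_mul_of_pos_right hAξ hξ₀]
  refine ⟨_, _, ?_, ?_, hnew⟩
  · rw [mul_comm (x + y), ← div_div, lt_div_iff₀ hp]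
    exact lt_of_pow_lt_pow_left₀ 2 (by positivity) (by linarith)
  · have hξη_lt : 1 < η / ξ :=
      lt_of_pow_lt_pow_left₀ 2 (by positivity) (by linarith [sq_nonneg (T * (x + y))])
    rw [div_lt_one hη]
    exact hAξ.trans ((one_lt_div hξ₀).mp hξη_lt)

lemma exists_lt (h : TangentTriangle S x y z) :
    ∃ x' y' z', x' < y' ∧ TangentTriangle S x' y' z' := by
  rcases lt_trichotomy x y with hxy | rfl | hxy
  · exact ⟨x, y, z, hxy, h⟩
  · obtain ⟨t, z', ht, hz', h'⟩ := h.exists_scale_gt (1 / x)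
    rw [div_lt_iff₀ h.x_pos] at ht
    exact ⟨z', t * x, t * x, hz'.trans ht, h'.rotate⟩
  · exact ⟨y, x, z, hxy, h.swap⟩

end TangentTriangle

section LawOfCosines

variable {k a b c : ℚ}

lemma abs_sub_mul_lt_of_law_of_cosines (hk : |k| < 1) (hb : b ≠ 0) (hc : 0 < c)
    (h : a ^ 2 + b ^ 2 - 2 * k * a * b = c ^ 2) : |a - k * b| < c := by
  refine abs_lt_of_sq_lt_sq ?_ hc.le
  have : 0 < (1 - k ^ 2) * b ^ 2 :=
    mul_pos (sub_pos.mpr ((sq_lt_one_iff_abs_lt_one k).mpr hk)) (by positivity)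
  linarith

lemma ne_zero_of_law_of_cosines (hk : |k| < 1) (hb : b ≠ 0)
    (h : a ^ 2 + b ^ 2 - 2 * k * a * b = c ^ 2) : c ≠ 0 := by
  rintro rfl
  have : 0 < (1 - k ^ 2) * b ^ 2 :=
    mul_pos (sub_pos.mpr ((sq_lt_one_iff_abs_lt_one k).mpr hk)) (by positivity)
  linarith [sq_nonneg (a - k * b)]

end LawOfCosines

/-- A triangle with sides `c`, `e`, `b + d` and a cevian `a` cutting the third side into `b` and `d`
at an angle of cosine `k`. With `k = s / r` and `m = r n` this is a θ-parallelogram envelope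
for `n`. -/
structure Envelope (k m a b c d e : ℚ) : Prop where
  a_pos : 0 < a
  b_pos : 0 < b
  c_pos : 0 < c
  d_pos : 0 < d
  e_pos : 0 < e
  cosine_left : a ^ 2 + b ^ 2 - 2 * k * a * b = c ^ 2
  cosine_right : a ^ 2 + d ^ 2 + 2 * k * a * d = e ^ 2
  area : a * (b + d) = m

section Envelope

variable {k m a b c d e x y z : ℚ}

lemma Envelope.cosine_right' (h : Envelope k m a b c d e) :
    a ^ 2 + d ^ 2 - 2 * -k * a * d = e ^ 2 := by
  rw [← h.cosine_right]
  ring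

lemma Envelope.tangentTriangle (hk : |k| < 1) (h : Envelope k m a b c d e) :
    TangentTriangle ((1 - k ^ 2) * m ^ 2 / 4) ((c + (b + d) - e) / 2) ((e + (b + d) - c) / 2)
      ((c + e - (b + d)) / 2) := by
  have hleft := h.cosine_left
  have hright := h.cosine_right
  have hb : |b - k * a| < c :=
    abs_sub_mul_lt_of_law_of_cosines hk h.a_pos.ne' h.c_pos (by linear_combination hleft)
  have hd : |d - -k * a| < e :=
    abs_sub_mul_lt_of_law_of_cosines (by rwa [abs_neg]) h.a_pos.ne' h.e_pos
      (by linear_combination hright)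
  rw [abs_lt] at hb hd
  have hbase : 0 < b + d := add_pos h.b_pos h.d_pos
  have he : e < c + (b + d) := by
    refine lt_of_pow_lt_pow_left₀ 2 (by linarith [h.c_pos]) ?_
    linarith [mul_pos hbase (show 0 < c + (b - k * a) by linarith)]
  have hc : c < e + (b + d) := by
    refine lt_of_pow_lt_pow_left₀ 2 (by linarith [h.e_pos]) ?_
    linarith [mul_pos hbase (show 0 < e + (d + k * a) by linarith)]
  refine ⟨by linarith, by linarith, by linarith, ?_⟩
  have hproj : c ^ 2 + (b + d) ^ 2 - e ^ 2 = 2 * (b + d) * (b - k * a) := by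
    linear_combination hright - hleft
  rw [← h.area]
  linear_combination (-(b + d) ^ 2 / 4) * hleft -
    (c ^ 2 + (b + d) ^ 2 - e ^ 2 + 2 * (b + d) * (b - k * a)) / 16 * hproj

lemma TangentTriangle.envelope (h : TangentTriangle ((1 - k ^ 2) * m ^ 2 / 4) x y z) (hm : 0 < m)
    (hb : 0 < x * (x + y) - z * (y - x) + k * m) (hd : 0 < y * (x + y) + z * (y - x) - k * m) :
    Envelope k m (m / (x + y)) ((x * (x + y) - z * (y - x) + k * m) / (x + y)) (x + z)
      ((y * (x + y) + z * (y - x) - k * m) / (x + y)) (y + z) := by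
  obtain ⟨hx, hy, hz, hS⟩ := h
  refine ⟨by positivity, by positivity, by positivity, by positivity, by positivity, ?_, ?_, ?_⟩
  · field_simp
    linear_combination (-4) * hS
  · field_simp
    linear_combination (-4) * hS
  · field_simp
    ring

theorem TangentTriangle.exists_envelope_le (h : TangentTriangle ((1 - k ^ 2) * m ^ 2 / 4) x y z)
    (hm : 0 < m) : ∃ a b c d e, b ≤ d ∧ Envelope k m a b c d e := by
  obtain ⟨x, y, z, hxy, h⟩ := h.exists_lt
  have hx := h.x_pos
  have hp : 0 < x + y := add_pos hx h.y_pos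
  have hsub : 0 < y - x := sub_pos.mpr hxy
  obtain ⟨t, z', ht, hz', h'⟩ := h.exists_scale_gt
    (max 1 (max ((|k * m| + (y - x)) / (x * (x + y))) (2 * |k * m| / ((y - x) * (x + y)))))
  simp only [max_lt_iff, div_lt_iff₀ (mul_pos hx hp), div_lt_iff₀ (mul_pos hsub hp)] at ht
  obtain ⟨ht₁, htb, htd⟩ := ht
  have ht₀ : 0 < t := one_pos.trans ht₁
  have hkm := abs_le.mp (le_refl |k * m|)
  have hb : 0 < t * x * (t * x + t * y) - z' * (t * y - t * x) + k * m := by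
    have hz : z' * (t * (y - x)) ≤ 1 * (t * (y - x)) := by gcongr
    have hscaled := mul_lt_mul_of_pos_left htb ht₀
    have := le_mul_of_one_le_left (abs_nonneg (k * m)) ht₁.le
    linarith
  have hbd : t * x * (t * x + t * y) - z' * (t * y - t * x) + k * m ≤
      t * y * (t * x + t * y) + z' * (t * y - t * x) - k * m := by
    have hz : 0 < z' * (t * (y - x)) := mul_pos h'.z_pos (mul_pos ht₀ hsub)
    have hscaled := mul_lt_mul_of_pos_left htd ht₀
    have := le_mul_of_one_le_left (abs_nonneg (k * m)) ht₁.le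
    linarith
  refine ⟨_, _, _, _, _, ?_, h'.envelope hm hb (hb.trans_le hbd)⟩
  have := add_pos h'.x_pos h'.y_pos
  gcongr

end Envelope

/-- The affine equation of the θ-congruent number curve of parameter `w`, with `cos θ = k`. -/
def OnThetaCurve (k w x y : ℚ) : Prop := y ^ 2 = x * (x + (1 + k) * w) * (x - (1 - k) * w)

section ThetaCurve

variable {k m a b c w x y : ℚ}

lemma onThetaCurve_of_law_of_cosines (h : a ^ 2 + b ^ 2 - 2 * k * a * b = c ^ 2) :
    OnThetaCurve k (2 * a * b) (2 * a * (a + c - k * b)) (2 * a * (2 * a * (a + c - k * b))) := by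
  rw [OnThetaCurve]
  linear_combination 8 * a ^ 3 * (a + c - k * b) * h

lemma law_of_cosines_of_onThetaCurve (ha : a ≠ 0) (hx : x ≠ 0) (hy : y ^ 2 = (2 * a * x) ^ 2)
    (h : OnThetaCurve k w x y) :
    a ^ 2 + (w / (2 * a)) ^ 2 - 2 * k * a * (w / (2 * a)) =
      |x / (2 * a) - a + k * (w / (2 * a))| ^ 2 := by
  have hcubic : 4 * a ^ 2 * x = (x + (1 + k) * w) * (x - (1 - k) * w) :=
    mul_left_cancel₀ hx (by rw [OnThetaCurve] at h; linear_combination h - hy)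
  rw [sq_abs]
  field_simp
  linear_combination hcubic

lemma Envelope.exists_onThetaCurve {d e : ℚ} (hk : |k| < 1) (h : Envelope k m a b c d e)
    (hbd : b ≤ d) : ∃ u v w x y, 0 < w ∧ w ≤ m ∧ y * v ≠ 0 ∧ OnThetaCurve k w x y ∧
      OnThetaCurve (-k) (2 * m - w) u v ∧ x * v = u * y := by
  have ha := h.a_pos
  have hb := h.b_pos
  have hx : 0 < a + c - k * b := by
    have := (abs_lt.mp (abs_sub_mul_lt_of_law_of_cosines hk hb.ne' h.c_pos h.cosine_left)).1
    linarith
  have hu : 0 < a + e - -k * d := by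
    have := (abs_lt.mp (abs_sub_mul_lt_of_law_of_cosines (by rwa [abs_neg]) h.d_pos.ne' h.e_pos
      h.cosine_right')).1
    linarith
  have hw : 2 * m - 2 * a * b = 2 * a * d := by
    rw [← h.area]
    ring
  refine ⟨_, _, 2 * a * b, _, _, by positivity, ?_, ?_,
    onThetaCurve_of_law_of_cosines h.cosine_left,
    hw ▸ onThetaCurve_of_law_of_cosines h.cosine_right', by ring⟩
  · rw [← h.area]
    linarith [mul_le_mul_of_nonneg_left hbd ha.le]
  · positivity

lemma exists_envelope_of_onThetaCurve {u v : ℚ} (hk : |k| < 1) (hw : 0 < w) (hwm : w ≤ m)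
    (hyv : y * v ≠ 0) (hxy : OnThetaCurve k w x y) (huv : OnThetaCurve (-k) (2 * m - w) u v)
    (hratio : x * v = u * y) : ∃ a b c d e, Envelope k m a b c d e := by
  obtain ⟨hy, hv⟩ := mul_ne_zero_iff.mp hyv
  have hx : x ≠ 0 := by
    rintro rfl
    simp [OnThetaCurve, hy] at hxy
  have hu : u ≠ 0 := by
    rintro rfl
    simp [OnThetaCurve, hv] at huv
  have hw' : 0 < 2 * m - w := by linarith
  obtain ⟨a, ha_def⟩ : ∃ a, a = |y / (2 * x)| := ⟨_, rfl⟩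
  have ha : 0 < a := by
    rw [ha_def]
    positivity
  have hslope_y : y ^ 2 = (2 * a * x) ^ 2 := by
    rw [ha_def, mul_pow, mul_pow, sq_abs]
    field_simp
  have hslope_v : v ^ 2 = (2 * a * u) ^ 2 := by
    refine mul_left_cancel₀ (pow_ne_zero 2 hx) ?_
    linear_combination (x * v + u * y) * hratio + u ^ 2 * hslope_y
  have hleft := law_of_cosines_of_onThetaCurve ha.ne' hx hslope_y hxy
  have hright := law_of_cosines_of_onThetaCurve ha.ne' hu hslope_v huv
  have hb : 0 < w / (2 * a) := by positivity
  have hd : 0 < (2 * m - w) / (2 * a) := by positivity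
  refine ⟨a, _, _, _, |u / (2 * a) - a + -k * ((2 * m - w) / (2 * a))|, ha, hb, ?_, hd, ?_,
    hleft, ?_, ?_⟩
  · exact (abs_nonneg _).lt_of_ne' (ne_zero_of_law_of_cosines hk hb.ne' hleft)
  · exact (abs_nonneg _).lt_of_ne'
      (ne_zero_of_law_of_cosines (by rwa [abs_neg]) hd.ne' hright)
  · rw [← hright]
    ring
  · field_simp
    ring

theorem exists_envelope_iff_exists_onThetaCurve (hk : |k| < 1) :
    (∃ a b c d e, Envelope k m a b c d e) ↔
      ∃ u v w x y, 0 < w ∧ w ≤ m ∧ y * v ≠ 0 ∧ OnThetaCurve k w x y ∧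
        OnThetaCurve (-k) (2 * m - w) u v ∧ x * v = u * y := by
  constructor
  · rintro ⟨a, b, c, d, e, h⟩
    have hm : 0 < m := h.area ▸ mul_pos h.a_pos (add_pos h.b_pos h.d_pos)
    obtain ⟨a, b, c, d, e, hbd, h⟩ := (h.tangentTriangle hk).exists_envelope_le hm
    exact h.exists_onThetaCurve hk hbd
  · rintro ⟨u, v, w, x, y, hw, hwm, hyv, hxy, huv, hratio⟩
    exact exists_envelope_of_onThetaCurve hk hw hwm hyv hxy huv hratio

end ThetaCurve

lemma isEnvelope_iff {r s : ℤ} {n : ℕ} {a b c d e : ℚ} :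
    IsEnvelope r s n a b c d e ↔ Envelope (s / r) (r * n) a b c d e := by
  rw [IsEnvelope, mul_div_assoc]
  exact ⟨fun ⟨ha, hb, hc, hd, he, hl, hr, hn⟩ ↦ ⟨ha, hb, hc, hd, he, hl, hr, hn⟩,
    fun ⟨ha, hb, hc, hd, he, hl, hr, hn⟩ ↦ ⟨ha, hb, hc, hd, he, hl, hr, hn⟩⟩

theorem stmt_2_general {r s n : ℚ} (hsr : |s| < r) :
    (∃ a b c d e : ℚ, Envelope (s / r) (r * n) a b c d e) ↔
    ∃ u v w x y : ℚ, 0 < w ∧ w ≤ n ∧ y * v ≠ 0 ∧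
      y ^ 2 = x * (x + (r + s) * w) * (x - (r - s) * w) ∧
      v ^ 2 = u * (u - (r + s) * (2 * n - w)) * (u + (r - s) * (2 * n - w)) ∧
      x * v = u * y := by
  have hr : 0 < r := (abs_nonneg s).trans_lt hsr
  have hk : |s / r| < 1 := by rwa [abs_div, abs_of_pos hr, div_lt_one hr]
  have hadd (w : ℚ) : (1 + s / r) * (r * w) = (r + s) * w := by field_simp
  have hsub (w : ℚ) : (1 - s / r) * (r * w) = (r - s) * w := by field_simp
  have hrest (w : ℚ) : 2 * (r * n) - r * w = r * (2 * n - w) := by ring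
  have hswap (u p q : ℚ) : u * (u + p) * (u - q) = u * (u - q) * (u + p) := by ring
  rw [exists_envelope_iff_exists_onThetaCurve hk]
  refine exists₂_congr fun u v ↦ ?_
  rw [(mul_left_surjective₀ hr.ne').exists]
  simp only [OnThetaCurve, mul_pos_iff_of_pos_left hr, mul_le_mul_iff_right₀ hr, hrest,
    sub_neg_eq_add, ← sub_eq_add_neg, hadd, hsub, hswap u]

theorem stmt_2 (r s : ℤ) (hrs : IsCoprime r s) (hs : 0 ≤ s) (hsr : s < r)
    (n : ℕ) (hn : 0 < n) :
    (∃ a b c d e : ℚ, IsEnvelope r s n a b c d e) ↔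
    ∃ u v w x y : ℚ, 0 < w ∧ w ≤ (n : ℚ) ∧ y * v ≠ 0 ∧
      y ^ 2 = x * (x + ((r : ℚ) + (s : ℚ)) * w) * (x - ((r : ℚ) - (s : ℚ)) * w) ∧
      v ^ 2 = u * (u - ((r : ℚ) + (s : ℚ)) * (2 * (n : ℚ) - w)) *
        (u + ((r : ℚ) - (s : ℚ)) * (2 * (n : ℚ) - w)) ∧
      x * v = u * y := by
  simp only [isEnvelope_iff]
  exact stmt_2_general (by rw [abs_of_nonneg (mod_cast hs)]; exact_mod_cast hsr)
end

section
/- Let r, s be coprime integers with 0 ≤ s < r. A positive integer n belongs to N_θ if and only if there exist rational numbers w, x, y, z with 0 < w ≤ n and y ≠ 0 such that, setting N = 2n − w, one has y² = x·(x + (r+s)w)·(x − (r−s)w) and z² = (x² + 2s(N+w)x − (r²−s²)w²)² + 4(r²−s²)N²x². -/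
/-!
The substitution `w = 2ab / r`, `x = 2a (a - (s/r) b + c)` matches the rational solutions of the two
equations with `0 < w ≤ n` and `y ≠ 0` with the envelopes satisfying `b ≤ d`; the only difficulty is
to replace an arbitrary envelope by one with `b ≤ d`.

With `H = sin² θ`, the triangles of an envelope give two rational points of the conic `g² = u² + H`,
namely `u = b/a - cos θ` and `u = d/a + cos θ`, and the area says that `r n` times the sum of the
two abscissas is a square. Multiplying the parameters `u + g` of both points by `m` turns this
condition into an equation `D (m - h / m) = ρ²`, that is, a rational point on `y² = x³ - A x` with
`y ≠ 0`. Such a point has infinite order, because repeated doubling eventually lowers the 2-adic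
valuation of `x² / A` at every step. Infinitely many rational points with bounded `x` would
accumulate in the real locus, and the differences of nearby points have arbitrarily large `x`. Hence
`m` can be taken as large as we like, which pushes the two parameters, once made distinct, far apart
and gives `b ≤ d`.
-/

open Filter Topology WeierstrassCurve

section Chords

variable {F : Type*} [Field F] [DecidableEq F] {W : Affine F} {x₁ x₂ y₁ y₂ : F}

lemma slope_negY_mul_sub_X (hx : x₁ ≠ x₂) :
    W.slope x₁ x₂ y₁ (W.negY x₂ y₂) * (x₁ - x₂) = y₁ - W.negY x₂ y₂ := by
  rw [Affine.slope_of_X_ne hx, div_mul_cancel₀ _ (sub_ne_zero.2 hx)]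

lemma slope_negY_mul_sub_Y (h₁ : W.Equation x₁ y₁) (h₂ : W.Equation x₂ y₂) (hx : x₁ ≠ x₂) :
    W.slope x₁ x₂ y₁ (W.negY x₂ y₂) * (y₁ - y₂) =
      x₁ ^ 2 + x₁ * x₂ + x₂ ^ 2 + W.a₂ * (x₁ + x₂) + W.a₄ - W.a₁ * y₁ := by
  rw [Affine.equation_iff] at h₁ h₂
  have hslope := slope_negY_mul_sub_X (W := W) (y₁ := y₁) (y₂ := y₂) hx
  apply mul_left_cancel₀ (sub_ne_zero.2 hx)
  rw [Affine.negY] at hslope ⊢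
  linear_combination (y₁ - y₂) * hslope + h₁ - h₂

end Chords

section RealPoints

variable {W : Affine ℝ}

lemma isClosed_setOf_equation {R : Type*} [CommRing R] [TopologicalSpace R] [IsTopologicalRing R]
    [T2Space R] {W : Affine R} : IsClosed {P : R × R | W.Equation P.1 P.2} := by
  simp only [Affine.equation_iff]
  exact isClosed_eq (by fun_prop) (by fun_prop)

lemma neg_le_of_cubic_nonneg {R : Type*} [CommRing R] [LinearOrder R] [IsStrictOrderedRing R]
    {b c d x : R} (h : 0 ≤ x ^ 3 + b * x ^ 2 + c * x + d) :
    -(1 + |b| + |c| + |d|) ≤ x := by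
  by_contra! hx
  have hb := abs_nonneg b
  have hc := abs_nonneg c
  have hd := abs_nonneg d
  have hx1 : x < -1 := by linarith
  have hx2 : -x ≤ x ^ 2 := by nlinarith [hx1]
  have hquad : b * x ^ 2 ≤ |b| * x ^ 2 := by gcongr; exact le_abs_self b
  have hlin : c * x ≤ |c| * x ^ 2 := calc
    c * x ≤ |c| * |x| := (le_abs_self _).trans (abs_mul c x).le
    _ ≤ |c| * x ^ 2 := by gcongr; rwa [abs_of_neg (by linarith)]
  have hconst : d ≤ |d| * x ^ 2 :=
    (le_abs_self d).trans (le_mul_of_one_le_right hd (by linarith))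
  have hneg : x ^ 2 * (1 + |b| + |c| + |d| + x) < 0 :=
    mul_neg_of_pos_of_neg (by linarith) (by linarith)
  linarith

lemma isCompact_setOf_equation_and_le (K : ℝ) :
    IsCompact {P : ℝ × ℝ | W.Equation P.1 P.2 ∧ P.1 ≤ K} := by
  let cubic : ℝ → ℝ := fun x ↦ x ^ 3 + W.b₂ / 4 * x ^ 2 + W.b₄ / 2 * x + W.b₆ / 4
  let C : ℝ := 1 + |W.b₂ / 4| + |W.b₄ / 2| + |W.b₆ / 4|
  have hcont : Continuous cubic := by fun_prop
  obtain ⟨M, hM⟩ := isCompact_Icc (a := -C) (b := K) |>.exists_bound_of_continuousOn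
    hcont.continuousOn
  have hbox : IsCompact ((fun Q : ℝ × ℝ ↦ (Q.1, Q.2 - (W.a₁ * Q.1 + W.a₃) / 2)) ''
      Set.Icc (-C) K ×ˢ Set.Icc (-√M) √M) :=
    (isCompact_Icc.prod isCompact_Icc).image (by fun_prop)
  refine hbox.of_isClosed_subset
    (isClosed_setOf_equation.inter (isClosed_le continuous_fst continuous_const)) ?_
  rintro ⟨x, y⟩ ⟨hxy, hxK⟩
  have hsq : (y + (W.a₁ * x + W.a₃) / 2) ^ 2 = cubic x := by
    rw [Affine.equation_iff] at hxy
    simp only [cubic, b₂, b₄, b₆]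
    linear_combination hxy
  have hx : x ∈ Set.Icc (-C) K := ⟨neg_le_of_cubic_nonneg ((sq_nonneg _).trans_eq hsq), hxK⟩
  have hy : |y + (W.a₁ * x + W.a₃) / 2| ≤ √M :=
    Real.abs_le_sqrt (hsq.trans_le ((le_abs_self _).trans (hM x hx)))
  exact ⟨(x, y + (W.a₁ * x + W.a₃) / 2), ⟨hx, abs_le.1 hy⟩, by simp⟩

lemma abs_slope_le_of_addX_le {K x₁ x₂ ℓ : ℝ} (h₁ : x₁ ≤ K) (h₂ : x₂ ≤ K)
    (h : W.addX x₁ x₂ ℓ ≤ K) : |ℓ| ≤ √(3 * K + W.a₂ + (W.a₁ / 2) ^ 2) + |W.a₁ / 2| := by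
  have hsq : (ℓ + W.a₁ / 2) ^ 2 ≤ 3 * K + W.a₂ + (W.a₁ / 2) ^ 2 := by
    rw [Affine.addX] at h
    linarith
  calc |ℓ| = |(ℓ + W.a₁ / 2) - W.a₁ / 2| := by rw [add_sub_cancel_right]
    _ ≤ |ℓ + W.a₁ / 2| + |W.a₁ / 2| := abs_sub _ _
    _ ≤ _ := by gcongr; exact Real.abs_le_sqrt hsq

/- If the slopes stayed bounded, `slope_negY_mul_sub_X` and `slope_negY_mul_sub_Y` would make both
partial derivatives of the Weierstrass polynomial vanish at `L`. -/
lemma not_slope_negY_bounded [W.IsElliptic] {ι : Type*} {l : Filter ι} [l.NeBot]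
    {P Q : ι → ℝ × ℝ} {L : ℝ × ℝ} (hP : ∀ i, W.Equation (P i).1 (P i).2)
    (hQ : ∀ i, W.Equation (Q i).1 (Q i).2) (hne : ∀ i, (P i).1 ≠ (Q i).1)
    (hPL : Tendsto P l (𝓝 L)) (hQL : Tendsto Q l (𝓝 L)) (B : ℝ) :
    ¬ ∀ i, |W.slope (P i).1 (Q i).1 (P i).2 (W.negY (Q i).1 (Q i).2)| ≤ B := by
  intro hB
  have hL : W.Equation L.1 L.2 := isClosed_setOf_equation.mem_of_tendsto hPL (.of_forall hP)
  have hP₁ : Tendsto (fun i ↦ (P i).1) l (𝓝 L.1) := (continuous_fst.tendsto L).comp hPL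
  have hP₂ : Tendsto (fun i ↦ (P i).2) l (𝓝 L.2) := (continuous_snd.tendsto L).comp hPL
  have hQ₁ : Tendsto (fun i ↦ (Q i).1) l (𝓝 L.1) := (continuous_fst.tendsto L).comp hQL
  have hQ₂ : Tendsto (fun i ↦ (Q i).2) l (𝓝 L.2) := (continuous_snd.tendsto L).comp hQL
  have hY : L.2 - W.negY L.1 L.2 = 0 := by
    have hlim := bdd_le_mul_tendsto_zero' B (.of_forall hB)
      (by simpa only [sub_self] using hP₁.sub hQ₁)
    simp only [slope_negY_mul_sub_X (hne _)] at hlim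
    refine tendsto_nhds_unique ?_ hlim
    exact hP₂.sub ((hQ₂.neg.sub (hQ₁.const_mul _)).sub_const _)
  have hX : L.1 ^ 2 + L.1 * L.1 + L.1 ^ 2 + W.a₂ * (L.1 + L.1) + W.a₄ - W.a₁ * L.2 = 0 := by
    have hlim := bdd_le_mul_tendsto_zero' B (.of_forall hB)
      (by simpa only [sub_self] using hP₂.sub hQ₂)
    simp only [slope_negY_mul_sub_Y (hP _) (hQ _) (hne _)] at hlim
    refine tendsto_nhds_unique ?_ hlim
    exact (((((hP₁.pow 2).add (hP₁.mul hQ₁)).add (hQ₁.pow 2)).add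
      ((hP₁.add hQ₁).const_mul _)).add_const _).sub (hP₂.const_mul _)
  rcases ((W.nonsingular_iff _ _).1 (W.equation_iff_nonsingular.1 hL)).2 with hne | hne
  · exact hne (by linear_combination -hX)
  · exact hne (sub_eq_zero.1 hY)

end RealPoints

theorem exists_lt_equation_of_infinite {F : Type*} [Field F] (f : F →+* ℝ) (W : Affine F)
    [W.IsElliptic] (hW : {x | ∃ y, W.Equation x y}.Infinite)
    (K : ℝ) : ∃ x y, K < f x ∧ W.Equation x y := by
  classical
  by_contra! hK
  replace hK : ∀ x y, W.Equation x y → f x ≤ K := fun x y h ↦ not_lt.1 fun hx ↦ hK x y hx h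
  let x : ℕ ↪ _ := hW.natEmbedding
  choose y hxy using fun i ↦ (x i).2
  let V : Affine ℝ := (W.map f).toAffine
  let P : ℕ → ℝ × ℝ := fun i ↦ (f (x i), f (y i))
  have hP i : V.Equation (P i).1 (P i).2 := (hxy i).map f
  obtain ⟨L, -, φ, hφ, hlim⟩ := (isCompact_setOf_equation_and_le K).tendsto_subseq
    fun i ↦ ⟨hP i, hK _ _ (hxy i)⟩
  let Q : ℕ → ℝ × ℝ := fun i ↦ P (φ (i + 1))
  have hne i : (x (φ i) : F) ≠ x (φ (i + 1)) := fun h ↦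
    (hφ i.lt_succ_self).ne (x.injective (Subtype.ext h))
  have hdiff i : V.addX (P (φ i)).1 (Q i).1
      (V.slope (P (φ i)).1 (Q i).1 (P (φ i)).2 (V.negY (Q i).1 (Q i).2)) ≤ K := by
    simpa only [P, Q, V, Affine.map_negY, Affine.map_slope,
      Affine.map_addX] using
      hK _ _ (Affine.equation_add (hxy (φ i))
        ((W.equation_neg _ _).2 (hxy (φ (i + 1)))) fun h ↦ hne i h.1)
  exact not_slope_negY_bounded (fun i ↦ hP (φ i)) (fun i ↦ hP (φ (i + 1)))
    (fun i h ↦ hne i (f.injective h)) hlim (hlim.comp (tendsto_add_atTop_nat 1)) _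
    fun i ↦ abs_slope_le_of_addX_le (hK _ _ (hxy (φ i))) (hK _ _ (hxy (φ (i + 1)))) (hdiff i)

section DoubledRatio

variable {ξ : ℚ}

/-- The value of `x² / A` at the double of a point of `y² = x³ - A x`, as a function of its value
`ξ` at the point. -/
def doubledRatio (ξ : ℚ) : ℚ :=
  (ξ + 1) ^ 4 / (16 * ξ * (ξ - 1) ^ 2)

lemma padicValRat_two_two : padicValRat 2 2 = 1 :=
  mod_cast padicValRat.self (p := 2) one_lt_two

lemma padicValRat_doubledRatio (h₀ : ξ ≠ 0) (h₁ : ξ + 1 ≠ 0) (h₂ : ξ - 1 ≠ 0) :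
    padicValRat 2 (doubledRatio ξ) =
      4 * padicValRat 2 (ξ + 1) - 4 - padicValRat 2 ξ - 2 * padicValRat 2 (ξ - 1) := by
  rw [doubledRatio, show (16 : ℚ) = 2 ^ 4 by norm_num,
    padicValRat.div (by positivity) (by positivity),
    padicValRat.mul (by positivity) (by positivity), padicValRat.mul (by positivity) h₀]
  simp only [padicValRat.pow, padicValRat_two_two]
  push_cast
  ring

lemma padicValRat_doubledRatio_of_neg (h₁ : ξ + 1 ≠ 0) (h₂ : ξ - 1 ≠ 0)
    (h : padicValRat 2 ξ < 0) :
    padicValRat 2 (doubledRatio ξ) = padicValRat 2 ξ - 4 := by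
  have h₀ : ξ ≠ 0 := by rintro rfl; simp at h
  have hadd : padicValRat 2 (ξ + 1) = padicValRat 2 ξ :=
    padicValRat.add_eq_of_lt h₁ h₀ one_ne_zero (by simpa using h)
  have hsub : padicValRat 2 (ξ - 1) = padicValRat 2 ξ := by
    rw [sub_eq_add_neg] at h₂ ⊢
    exact padicValRat.add_eq_of_lt h₂ h₀ (by norm_num) (by simpa using h)
  rw [padicValRat_doubledRatio h₀ h₁ h₂, hadd, hsub]
  ring

lemma padicValRat_doubledRatio_of_pos (h₁ : ξ + 1 ≠ 0) (h₂ : ξ - 1 ≠ 0)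
    (h : 0 < padicValRat 2 ξ) : padicValRat 2 (doubledRatio ξ) < 0 := by
  have h₀ : ξ ≠ 0 := by rintro rfl; simp at h
  have hadd : padicValRat 2 (ξ + 1) = 0 := by
    rw [add_comm] at h₁ ⊢
    simpa using padicValRat.add_eq_of_lt h₁ one_ne_zero h₀ (by simpa using h)
  have hsub : padicValRat 2 (ξ - 1) = 0 := by
    rw [sub_eq_neg_add] at h₂ ⊢
    simpa using padicValRat.add_eq_of_lt h₂ (by norm_num) h₀ (by simpa using h)
  rw [padicValRat_doubledRatio h₀ h₁ h₂, hadd, hsub]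
  omega

-- If `ξ` is a unit, exactly one of `ξ ± 1` has valuation `1`, because they differ by `2`.
lemma padicValRat_doubledRatio_ne_zero (h₀ : ξ ≠ 0) (h₁ : ξ + 1 ≠ 0) (h₂ : ξ - 1 ≠ 0)
    (h : padicValRat 2 ξ = 0) : padicValRat 2 (doubledRatio ξ) ≠ 0 := by
  have hsub : 0 ≤ padicValRat 2 (ξ - 1) := by
    rw [sub_eq_add_neg] at h₂ ⊢
    simpa [h] using padicValRat.min_le_padicValRat_add (p := 2) h₂
  have hadd_sub : min (padicValRat 2 (ξ + 1)) 1 ≤ padicValRat 2 (ξ - 1) := by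
    have := padicValRat.min_le_padicValRat_add (p := 2) (q := ξ + 1) (r := -2)
    rw [show ξ + 1 + -2 = ξ - 1 by ring, padicValRat.neg, padicValRat_two_two] at this
    exact this h₂
  have hmin : min (padicValRat 2 (ξ + 1)) (padicValRat 2 (ξ - 1)) ≤ 1 := by
    have := padicValRat.min_le_padicValRat_add (p := 2) (q := ξ + 1) (r := -(ξ - 1))
    rw [show ξ + 1 + -(ξ - 1) = 2 by ring, padicValRat.neg, padicValRat_two_two] at this
    exact this two_ne_zero
  rw [padicValRat_doubledRatio h₀ h₁ h₂, h]
  omega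

end DoubledRatio

section Lemniscatic

/-- The elliptic curve `y² = x³ - A x`. -/
def lemniscaticCurve {R : Type*} [CommRing R] (A : R) : Affine R :=
  ⟨0, 0, 0, -A, 0⟩

lemma lemniscaticCurve_equation {R : Type*} [CommRing R] {A x y : R} :
    (lemniscaticCurve A).Equation x y ↔ y ^ 2 = x ^ 3 - A * x := by
  simp [lemniscaticCurve, Affine.equation_iff, sub_eq_add_neg]

lemma isElliptic_lemniscaticCurve {F : Type*} [Field F] [NeZero (2 : F)] {A : F} (hA : A ≠ 0) :
    (lemniscaticCurve A).IsElliptic := by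
  have hΔ : (lemniscaticCurve A).Δ = 2 ^ 6 * A ^ 3 := by
    simp only [lemniscaticCurve, Δ, b₂, b₄, b₆, b₈]
    ring
  exact ⟨(hΔ ▸ mul_ne_zero (pow_ne_zero _ two_ne_zero) (pow_ne_zero _ hA)).isUnit⟩

variable {A x y : ℚ}

lemma sq_div_ne_of_lemniscaticCurve_equation (hA : 0 < A) (hy : y ≠ 0)
    (h : (lemniscaticCurve A).Equation x y) :
    x ^ 2 / A ≠ 0 ∧ x ^ 2 / A + 1 ≠ 0 ∧ x ^ 2 / A - 1 ≠ 0 := by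
  rw [lemniscaticCurve_equation] at h
  have hprod : x * (x ^ 2 - A) ≠ 0 := fun h0 ↦ hy (by
    rw [← sq_eq_zero_iff]; linear_combination h + h0)
  have hx : x ≠ 0 := left_ne_zero_of_mul hprod
  refine ⟨by positivity, by positivity, ?_⟩
  rw [div_sub_one hA.ne']
  exact div_ne_zero (right_ne_zero_of_mul hprod) hA.ne'

lemma exists_double_lemniscaticCurve (hA : 0 < A) (hy : y ≠ 0)
    (h : (lemniscaticCurve A).Equation x y) :
    ∃ x' y', (lemniscaticCurve A).Equation x' y' ∧ x' ≠ 0 ∧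
      x' ^ 2 / A = doubledRatio (x ^ 2 / A) := by
  have hneg : (lemniscaticCurve A).negY x y = -y := by simp [lemniscaticCurve, Affine.negY]
  have hyneg : y ≠ (lemniscaticCurve A).negY x y := by rwa [hneg, ne_eq, self_eq_neg]
  have hdouble := Affine.equation_add h h fun h ↦ hyneg h.2
  rw [lemniscaticCurve_equation] at h
  have hx' : (lemniscaticCurve A).addX x x ((lemniscaticCurve A).slope x x y y) =
      (x ^ 2 + A) ^ 2 / (4 * y ^ 2) := by
    rw [Affine.slope_of_Y_ne rfl hyneg, hneg]
    simp only [Affine.addX, lemniscaticCurve]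
    field_simp
    linear_combination (-32 * x) * h
  refine ⟨_, _, hdouble, ?_, ?_⟩ <;> rw [hx']
  · positivity
  · rw [h, doubledRatio]
    field_simp
    norm_num

lemma exists_lemniscaticCurve_equation_doubledRatio (hA : 0 < A) (hy : y ≠ 0)
    (h : (lemniscaticCurve A).Equation x y)
    (hv : padicValRat 2 (doubledRatio (x ^ 2 / A)) ≠ 0) :
    ∃ x' y', (lemniscaticCurve A).Equation x' y' ∧ y' ≠ 0 ∧
      x' ^ 2 / A = doubledRatio (x ^ 2 / A) := by
  obtain ⟨x', y', h', hx', hratio⟩ := exists_double_lemniscaticCurve hA hy h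
  refine ⟨x', y', h', ?_, hratio⟩
  rintro rfl
  rw [lemniscaticCurve_equation] at h'
  have hxA : x' ^ 2 = A := mul_left_cancel₀ hx' (by linear_combination -h')
  simp [← hratio, hxA, hA.ne'] at hv

/-- The rational points `(x, y)` of `y² = x³ - A x` with `y ≠ 0` for which `x² / A` has negative
`2`-adic valuation: doubling maps this set to itself and strictly lowers the valuation. -/
def negValPoints (A : ℚ) : Set (ℚ × ℚ) :=
  {P | (lemniscaticCurve A).Equation P.1 P.2 ∧ P.2 ≠ 0 ∧ padicValRat 2 (P.1 ^ 2 / A) < 0}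

lemma exists_mem_negValPoints_lt (hA : 0 < A) {P : ℚ × ℚ} (hP : P ∈ negValPoints A) :
    ∃ Q ∈ negValPoints A, padicValRat 2 (Q.1 ^ 2 / A) < padicValRat 2 (P.1 ^ 2 / A) := by
  obtain ⟨h, hy, hv⟩ := hP
  obtain ⟨-, h₁, h₂⟩ := sq_div_ne_of_lemniscaticCurve_equation hA hy h
  have hv' := padicValRat_doubledRatio_of_neg h₁ h₂ hv
  obtain ⟨x', y', h', hy', hratio⟩ :=
    exists_lemniscaticCurve_equation_doubledRatio hA hy h (by omega)
  rw [← hratio] at hv'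
  have hlt : padicValRat 2 (x' ^ 2 / A) < padicValRat 2 (P.1 ^ 2 / A) := by omega
  exact ⟨(x', y'), ⟨h', hy', hlt.trans hv⟩, hlt⟩

lemma negValPoints_nonempty_of_ne_zero (hA : 0 < A) (hy : y ≠ 0)
    (h : (lemniscaticCurve A).Equation x y) (hv : padicValRat 2 (x ^ 2 / A) ≠ 0) :
    (negValPoints A).Nonempty := by
  rcases hv.lt_or_gt with hneg | hpos
  · exact ⟨(x, y), h, hy, hneg⟩
  · obtain ⟨-, h₁, h₂⟩ := sq_div_ne_of_lemniscaticCurve_equation hA hy h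
    have hv' := padicValRat_doubledRatio_of_pos h₁ h₂ hpos
    obtain ⟨x', y', h', hy', hratio⟩ :=
      exists_lemniscaticCurve_equation_doubledRatio hA hy h hv'.ne
    exact ⟨(x', y'), h', hy', hratio ▸ hv'⟩

lemma negValPoints_nonempty (hA : 0 < A) (hy : y ≠ 0) (h : (lemniscaticCurve A).Equation x y) :
    (negValPoints A).Nonempty := by
  by_cases hv : padicValRat 2 (x ^ 2 / A) = 0
  · obtain ⟨h₀, h₁, h₂⟩ := sq_div_ne_of_lemniscaticCurve_equation hA hy h
    have hv' := padicValRat_doubledRatio_ne_zero h₀ h₁ h₂ hv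
    obtain ⟨x', y', h', hy', hratio⟩ := exists_lemniscaticCurve_equation_doubledRatio hA hy h hv'
    exact negValPoints_nonempty_of_ne_zero hA hy' h' (hratio ▸ hv')
  · exact negValPoints_nonempty_of_ne_zero hA hy h hv

lemma infinite_setOf_lemniscaticCurve_equation (hA : 0 < A) (hy : y ≠ 0)
    (h : (lemniscaticCurve A).Equation x y) :
    {x | ∃ y, (lemniscaticCurve A).Equation x y}.Infinite := by
  have hinf : (Prod.fst '' negValPoints A).Infinite := fun hfin ↦ by
    obtain ⟨_, ⟨P, hP, rfl⟩, hmin⟩ := Set.exists_min_image _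
      (fun x ↦ padicValRat 2 (x ^ 2 / A)) hfin ((negValPoints_nonempty hA hy h).image _)
    obtain ⟨Q, hQ, hlt⟩ := exists_mem_negValPoints_lt hA hP
    exact (hmin _ ⟨Q, hQ, rfl⟩).not_gt hlt
  refine hinf.mono ?_
  rintro _ ⟨P, hP, rfl⟩
  exact ⟨P.2, hP.1⟩

lemma exists_lt_lemniscaticCurve_equation (hA : 0 < A) (hy : y ≠ 0)
    (h : (lemniscaticCurve A).Equation x y) (K : ℚ) :
    ∃ x' y', K < x' ∧ (lemniscaticCurve A).Equation x' y' := by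
  have := isElliptic_lemniscaticCurve hA.ne'
  obtain ⟨x', y', hK, h'⟩ := exists_lt_equation_of_infinite (algebraMap ℚ ℝ) _
    (infinite_setOf_lemniscaticCurve_equation hA hy h) K
  exact ⟨x', y', by simpa using hK, h'⟩

end Lemniscatic

lemma exists_lt_isSquare_mul_sub_div {D h m : ℚ} (hD : 0 < D) (hh : 0 < h)
    (hne : D * (m - h / m) ≠ 0) (hsq : IsSquare (D * (m - h / m))) (K : ℚ) :
    ∃ m', K < m' ∧ IsSquare (D * (m' - h / m')) := by
  obtain ⟨ρ, hρ⟩ := hsq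
  have hm : m ≠ 0 := by rintro rfl; simp at hne
  have hρ₀ : ρ ≠ 0 := by rintro rfl; simp [hρ] at hne
  have hcurve : (lemniscaticCurve (D ^ 2 * h)).Equation (D * m) (D * m * ρ) := by
    rw [lemniscaticCurve_equation, mul_pow, sq ρ, ← hρ]
    field_simp
  obtain ⟨x, y, hx, hxy⟩ := exists_lt_lemniscaticCurve_equation (by positivity)
    (by positivity) hcurve (D * max K 0)
  have hm' : max K 0 < x / D := by rwa [lt_div_iff₀' hD]
  have hx₀ : x ≠ 0 := by
    rintro rfl
    simp at hm'
  rw [lemniscaticCurve_equation] at hxy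
  refine ⟨x / D, (le_max_left _ _).trans_lt hm', y / x, ?_⟩
  field_simp
  linear_combination -hxy

section Conic

variable {H T p q u g : ℚ}

/-- The `u`-coordinate of the point of the hyperbola `g² = u² + H` with `u + g = p`. -/
def conicAbscissa (H p : ℚ) : ℚ :=
  (p - H / p) / 2

/-- The `g`-coordinate of the point of the hyperbola `g² = u² + H` with `u + g = p`. -/
def conicOrdinate (H p : ℚ) : ℚ :=
  (p + H / p) / 2

lemma conicOrdinate_sq (hp : p ≠ 0) : conicOrdinate H p ^ 2 = conicAbscissa H p ^ 2 + H := by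
  rw [conicOrdinate, conicAbscissa]
  field_simp
  ring

lemma conicOrdinate_pos (hH : 0 ≤ H) (hp : 0 < p) : 0 < conicOrdinate H p := by
  rw [conicOrdinate]
  positivity

lemma conicAbscissa_add (h : g ^ 2 = u ^ 2 + H) (hp : u + g ≠ 0) :
    conicAbscissa H (u + g) = u := by
  rw [conicAbscissa]
  field_simp
  linear_combination h

lemma add_pos_of_sq_eq_sq_add (hH : 0 < H) (hg : 0 < g) (h : g ^ 2 = u ^ 2 + H) : 0 < u + g := by
  have := (abs_lt_of_sq_lt_sq' (by linarith : u ^ 2 < g ^ 2) hg.le).1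
  linarith

lemma sub_div_two_le_conicAbscissa_sub (hH : 0 ≤ H) (hp : 0 < p) (hpq : p ≤ q) :
    (q - p) / 2 ≤ conicAbscissa H q - conicAbscissa H p := by
  have : H / q ≤ H / p := by gcongr
  rw [conicAbscissa, conicAbscissa]
  linarith

lemma conicAbscissa_mul_add_conicAbscissa_mul {m : ℚ} (hm : m ≠ 0) (hp : p ≠ 0) (hq : q ≠ 0) :
    conicAbscissa H (m * p) + conicAbscissa H (m * q) =
      (p + q) / 2 * (m - H / (p * q) / m) := by
  rw [conicAbscissa, conicAbscissa]
  field_simp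
  ring

/-- Two points of the hyperbola `g² = u² + H`, given by their parameters `u + g = p` and
`u + g = q`, whose abscissas have a positive sum that becomes a square when multiplied by `T`. An
envelope yields such a pair for `T = r n`, with `b / a - s / r` and `d / a + s / r` as abscissas. -/
def IsAdmissiblePair (H T p q : ℚ) : Prop :=
  0 < p ∧ 0 < q ∧ 0 < conicAbscissa H p + conicAbscissa H q ∧
    IsSquare (T * (conicAbscissa H p + conicAbscissa H q))

lemma IsAdmissiblePair.symm (h : IsAdmissiblePair H T p q) : IsAdmissiblePair H T q p := by
  obtain ⟨hp, hq, hpos, hsq⟩ := h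
  rw [add_comm] at hpos hsq
  exact ⟨hq, hp, hpos, hsq⟩

lemma IsAdmissiblePair.exists_lt_mul (hH : 0 < H) (hT : 0 < T) (h : IsAdmissiblePair H T p q)
    (K : ℚ) : ∃ m, K < m ∧ IsAdmissiblePair H T (m * p) (m * q) := by
  obtain ⟨hp, hq, hpos, hsq⟩ := h
  have hray {m : ℚ} (hm : m ≠ 0) : T * (conicAbscissa H (m * p) + conicAbscissa H (m * q)) =
      T * ((p + q) / 2) * (m - H / (p * q) / m) := by
    rw [conicAbscissa_mul_add_conicAbscissa_mul hm hp.ne' hq.ne', mul_assoc]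
  have hone := hray one_ne_zero
  rw [one_mul, one_mul] at hone
  rw [hone] at hsq
  obtain ⟨m, hm, hsq'⟩ := exists_lt_isSquare_mul_sub_div (by positivity)
    (by positivity) (hone ▸ (mul_pos hT hpos).ne') hsq (max K (max 1 (H / (p * q))))
  simp only [max_lt_iff] at hm
  obtain ⟨hKm, h1m, hm⟩ := hm
  have hm₀ : 0 < m := one_pos.trans h1m
  have hdiv : H / (p * q) / m < m := by
    rw [div_lt_iff₀ hm₀]
    nlinarith
  refine ⟨m, hKm, by positivity, by positivity, ?_, by rwa [hray hm₀.ne']⟩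
  rw [conicAbscissa_mul_add_conicAbscissa_mul hm₀.ne' hp.ne' hq.ne']
  exact mul_pos (by positivity) (sub_pos.2 hdiv)

/- With `h = √H`, `p = h tan α` and `q = h tan β`, the third parameter is `h tan γ` for
`α + β + γ = π`. The abscissas of `p` and `q` add up to `h sin 2γ / (sin 2α sin 2β)`, so replacing
`q` by the third parameter multiplies the sum by the square of `sin 2β / sin 2γ`. -/
lemma IsAdmissiblePair.replace_right (hH : 0 < H) (h : IsAdmissiblePair H T p q) :
    IsAdmissiblePair H T p (H * (p + q) / (p * q - H)) := by
  obtain ⟨hp, hq, hpos, hsq⟩ := h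
  have hpq : 0 < p * q - H := by
    have hprod : (p + q) * (p * q - H) =
        2 * (p * q) * (conicAbscissa H p + conicAbscissa H q) := by
      rw [conicAbscissa, conicAbscissa]
      field_simp
      ring
    exact pos_of_mul_pos_right (hprod ▸ mul_pos (by positivity) hpos) (by positivity)
  set t := H * (p + q) / (p * q - H) with ht
  have ht₀ : 0 < t := by positivity
  have hsum : conicAbscissa H p + conicAbscissa H t =
      (conicAbscissa H p + conicAbscissa H q) * ((p + t) / (p + q)) ^ 2 := by
    rw [conicAbscissa, conicAbscissa, conicAbscissa, ht]
    field_simp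
    ring
  refine ⟨hp, ht₀, by rw [hsum]; positivity, ?_⟩
  rw [hsum, ← mul_assoc]
  exact hsq.mul (IsSquare.sq _)

lemma IsAdmissiblePair.exists_lt (hH : 0 < H) (hT : 0 < T) (h : IsAdmissiblePair H T p q) :
    ∃ p' q', p' < q' ∧ IsAdmissiblePair H T p' q' := by
  suffices ∃ p' q', p' ≠ q' ∧ IsAdmissiblePair H T p' q' by
    obtain ⟨p', q', hne, h'⟩ := this
    rcases hne.lt_or_gt with hlt | hgt
    · exact ⟨p', q', hlt, h'⟩
    · exact ⟨q', p', hgt, h'.symm⟩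
  rcases ne_or_eq p q with hne | rfl
  · exact ⟨p, q, hne, h⟩
  obtain ⟨m, hm, hP⟩ := h.exists_lt_mul hH hT ((3 * H + 1) / p)
  rw [div_lt_iff₀ h.1] at hm
  set P := m * p
  have hsq : 3 * H < P ^ 2 := by nlinarith
  refine ⟨P, _, fun heq ↦ ?_, hP.replace_right hH⟩
  rw [eq_div_iff (by nlinarith)] at heq
  have : P * (P ^ 2 - 3 * H) = 0 := by linear_combination heq
  exact (mul_pos hP.1 (sub_pos.2 hsq)).ne' this

lemma IsAdmissiblePair.exists_lt_and_lt_sub (hH : 0 < H) (hT : 0 < T)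
    (h : IsAdmissiblePair H T p q) (K : ℚ) :
    ∃ p' q', K < p' ∧ K < q' - p' ∧ IsAdmissiblePair H T p' q' := by
  obtain ⟨p', q', hlt, h'⟩ := h.exists_lt hH hT
  obtain ⟨m, hm, hm'⟩ := h'.exists_lt_mul hH hT (max (K / p') (K / (q' - p')))
  rw [max_lt_iff, div_lt_iff₀ h'.1, div_lt_iff₀ (sub_pos.2 hlt), mul_sub] at hm
  exact ⟨m * p', m * q', hm.1, hm.2, hm'⟩

end Conic

section Envelopes

variable {r s n a b c d e w x y z : ℚ}

/-- `IsEnvelope` with rational parameters `r`, `s` and `n`. -/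
def IsRationalEnvelope (r s n a b c d e : ℚ) : Prop :=
  0 < a ∧ 0 < b ∧ 0 < c ∧ 0 < d ∧ 0 < e ∧
  a ^ 2 + b ^ 2 - (2 * s / r) * a * b = c ^ 2 ∧
  a ^ 2 + d ^ 2 + (2 * s / r) * a * d = e ^ 2 ∧
  a * (b + d) = r * n

lemma abs_div_lt_one (hsr : |s| < r) : |s / r| < 1 := by
  have hr : 0 < r := (abs_nonneg s).trans_lt hsr
  rwa [abs_div, abs_of_pos hr, div_lt_one hr]

lemma one_sub_sq_div_pos (hsr : |s| < r) : 0 < 1 - (s / r) ^ 2 :=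
  sub_pos.2 ((sq_lt_one_iff_abs_lt_one _).2 (abs_div_lt_one hsr))

lemma IsRationalEnvelope.isAdmissiblePair (hsr : |s| < r)
    (h : IsRationalEnvelope r s n a b c d e) :
    IsAdmissiblePair (1 - (s / r) ^ 2) (r * n) (b / a - s / r + c / a)
      (d / a + s / r + e / a) := by
  obtain ⟨ha, hb, hc, hd, he, hleft, hright, harea⟩ := h
  have hH := one_sub_sq_div_pos hsr
  have hp : (c / a) ^ 2 = (b / a - s / r) ^ 2 + (1 - (s / r) ^ 2) := by
    rw [div_pow, ← hleft]
    field_simp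
    ring
  have hq : (e / a) ^ 2 = (d / a + s / r) ^ 2 + (1 - (s / r) ^ 2) := by
    rw [div_pow, ← hright]
    field_simp
    ring
  have hp₀ := add_pos_of_sq_eq_sq_add hH (by positivity) hp
  have hq₀ := add_pos_of_sq_eq_sq_add hH (by positivity) hq
  have hsum : b / a - s / r + (d / a + s / r) = r * n / a ^ 2 := by
    rw [← harea]
    field_simp
    ring
  have harea₀ : 0 < r * n := harea ▸ by positivity
  rw [IsAdmissiblePair, conicAbscissa_add hp hp₀.ne', conicAbscissa_add hq hq₀.ne', hsum]
  exact ⟨hp₀, hq₀, by positivity, r * n / a, by ring⟩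

lemma IsAdmissiblePair.exists_isRationalEnvelope_le {p q : ℚ} (hsr : |s| < r) (hT : 0 < r * n)
    (h : IsAdmissiblePair (1 - (s / r) ^ 2) (r * n) p q)
    (hp : 0 < conicAbscissa (1 - (s / r) ^ 2) p + s / r)
    (hpq : conicAbscissa (1 - (s / r) ^ 2) p + s / r ≤ conicAbscissa (1 - (s / r) ^ 2) q - s / r) :
    ∃ a b c d e, b ≤ d ∧ IsRationalEnvelope r s n a b c d e := by
  obtain ⟨hp₀, hq₀, hpos, ρ, hρ⟩ := h
  have hH := (one_sub_sq_div_pos hsr).le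
  set k := s / r with hk
  set u := conicAbscissa (1 - k ^ 2) p
  set v := conicAbscissa (1 - k ^ 2) q
  have hρ₀ : ρ ≠ 0 := by
    rintro rfl
    exact (mul_pos hT hpos).ne' (by rw [hρ, zero_mul])
  have ha : 0 < r * n / |ρ| := by positivity
  set a := r * n / |ρ| with ha_def
  have harea : a ^ 2 * (u + v) = r * n := by
    rw [ha_def, div_pow, sq_abs, div_mul_eq_mul_div, div_eq_iff (by positivity)]
    linear_combination r * n * hρ
  refine ⟨a, a * (u + k), a * conicOrdinate (1 - k ^ 2) p, a * (v - k),
    a * conicOrdinate (1 - k ^ 2) q, by gcongr, ha, mul_pos ha hp,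
    mul_pos ha (conicOrdinate_pos hH hp₀), mul_pos ha (hp.trans_le hpq),
    mul_pos ha (conicOrdinate_pos hH hq₀), ?_, ?_, by linear_combination harea⟩
  · rw [mul_pow _ (conicOrdinate _ p), conicOrdinate_sq hp₀.ne', mul_div_assoc, ← hk]
    ring
  · rw [mul_pow _ (conicOrdinate _ q), conicOrdinate_sq hq₀.ne', mul_div_assoc, ← hk]
    ring

theorem IsRationalEnvelope.exists_le (hsr : |s| < r) (h : IsRationalEnvelope r s n a b c d e) :
    ∃ a b c d e, b ≤ d ∧ IsRationalEnvelope r s n a b c d e := by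
  have hpair := h.isAdmissiblePair hsr
  obtain ⟨ha, hb, -, hd, -, -, -, harea⟩ := h
  have hT : 0 < r * n := harea ▸ by positivity
  have hH := one_sub_sq_div_pos hsr
  have hk := abs_lt.1 (abs_div_lt_one hsr)
  obtain ⟨p, q, hp, hqp, hpq⟩ := hpair.exists_lt_and_lt_sub hH hT 4
  have hu : 1 < conicAbscissa (1 - (s / r) ^ 2) p := by
    have hdiv : (1 - (s / r) ^ 2) / p < 1 := by
      rw [div_lt_one hpq.1]
      linarith [sq_nonneg (s / r)]
    rw [conicAbscissa]
    linarith
  have huv := sub_div_two_le_conicAbscissa_sub hH.le hpq.1 (by linarith : p ≤ q)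
  exact hpq.exists_isRationalEnvelope_le hsr hT (by linarith) (by linarith)

/-- A rational point with `y ≠ 0`, for a parameter `0 < w ≤ n`, on the curve cut out by the two
equations for `y ^ 2` and `z ^ 2`; here `2 * n - w` is the number called `N` in the paper. -/
def IsEnvelopePoint (r s n w x y z : ℚ) : Prop :=
  0 < w ∧ w ≤ n ∧ y ≠ 0 ∧
  y ^ 2 = x * (x + (r + s) * w) * (x - (r - s) * w) ∧
  z ^ 2 = (x ^ 2 + 2 * s * ((2 * n - w) + w) * x - (r ^ 2 - s ^ 2) * w ^ 2) ^ 2 +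
    4 * (r ^ 2 - s ^ 2) * (2 * n - w) ^ 2 * x ^ 2

lemma envelope_quartic_eq {N : ℚ} (hr : r ≠ 0)
    (hx : x ^ 2 + 2 * s * w * x - (r ^ 2 - s ^ 2) * w ^ 2 = 4 * a ^ 2 * x)
    (hN : r * N = 2 * a * d) :
    (x ^ 2 + 2 * s * (N + w) * x - (r ^ 2 - s ^ 2) * w ^ 2) ^ 2 +
      4 * (r ^ 2 - s ^ 2) * N ^ 2 * x ^ 2 =
      (4 * a * x) ^ 2 * (a ^ 2 + d ^ 2 + (2 * s / r) * a * d) := by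
  have hcross : s * N = (2 * s / r) * a * d := by
    field_simp
    linear_combination s * hN
  linear_combination (x ^ 2 + 2 * s * w * x - (r ^ 2 - s ^ 2) * w ^ 2 + 4 * a ^ 2 * x +
    4 * s * N * x) * hx + 4 * x ^ 2 * (r * N + 2 * a * d) * hN + 16 * a ^ 2 * x ^ 2 * hcross

-- The left-hand side is that of `envelope_quartic_eq` for `N = -w`, where it becomes a square.
lemma envelope_sq_eq (hr : r ≠ 0)
    (hx : x ^ 2 + 2 * s * w * x - (r ^ 2 - s ^ 2) * w ^ 2 = 4 * a ^ 2 * x)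
    (hw : r * w = 2 * a * b) :
    (x ^ 2 + (r ^ 2 - s ^ 2) * w ^ 2) ^ 2 =
      (4 * a * x) ^ 2 * (a ^ 2 + b ^ 2 - (2 * s / r) * a * b) := by
  have hN : r * -w = 2 * a * -b := by linear_combination -hw
  linear_combination envelope_quartic_eq hr hx hN

lemma IsRationalEnvelope.exists_isEnvelopePoint (hsr : |s| < r)
    (h : IsRationalEnvelope r s n a b c d e) (hbd : b ≤ d) :
    ∃ w x y z, IsEnvelopePoint r s n w x y z := by
  obtain ⟨ha, hb, hc, -, -, hleft, hright, harea⟩ := h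
  have hr : 0 < r := (abs_nonneg s).trans_lt hsr
  have hX : 0 < a - s / r * b + c := by
    refine add_pos_of_sq_eq_sq_add (H := (1 - (s / r) ^ 2) * b ^ 2)
      (mul_pos (one_sub_sq_div_pos hsr) (by positivity)) hc ?_
    linear_combination -hleft
  set x := 2 * a * (a - s / r * b + c) with hx_def
  have hx₀ : 0 < x := by positivity
  set w := 2 * a * b / r with hw_def
  have hx : x ^ 2 + 2 * s * w * x - (r ^ 2 - s ^ 2) * w ^ 2 = 4 * a ^ 2 * x := by
    rw [hx_def, hw_def]
    field_simp at hleft ⊢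
    linear_combination (-2) * r * hleft
  have hN : r * (2 * n - w) = 2 * a * d := by
    rw [hw_def, mul_sub, mul_div_cancel₀ _ hr.ne']
    linear_combination -2 * harea
  have hwn : w ≤ n := by
    rw [hw_def, div_le_iff₀ hr]
    nlinarith
  refine ⟨w, x, 2 * a * x, 4 * a * x * e, by positivity, hwn,
    mul_ne_zero (by positivity) hx₀.ne', ?_, ?_⟩
  · linear_combination -x * hx
  · rw [envelope_quartic_eq hr.ne' hx hN, hright]
    ring

lemma IsEnvelopePoint.exists_isRationalEnvelope (hsr : |s| < r)
    (h : IsEnvelopePoint r s n w x y z) : ∃ a b c d e, IsRationalEnvelope r s n a b c d e := by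
  obtain ⟨hw₀, hwn, hy, hyx, hzx⟩ := h
  have hr : 0 < r := (abs_nonneg s).trans_lt hsr
  have hrs : 0 < r ^ 2 - s ^ 2 := sub_pos.2 (sq_lt_sq.2 (by rwa [abs_of_pos hr]))
  have hN₀ : 0 < 2 * n - w := by linarith
  have hx₀ : x ≠ 0 := by
    rintro rfl
    exact hy (by simpa using hyx)
  have ha : 0 < |y / (2 * x)| := by positivity
  set a := |y / (2 * x)| with ha_def
  have hx : x ^ 2 + 2 * s * w * x - (r ^ 2 - s ^ 2) * w ^ 2 = 4 * a ^ 2 * x := by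
    rw [ha_def, sq_abs, div_pow, hyx]
    field_simp
    ring
  have hz : z ≠ 0 := by
    rw [← sq_pos_iff, hzx]
    positivity
  have hb : r * w = 2 * a * (r * w / (2 * a)) := by field_simp
  have hd : r * (2 * n - w) = 2 * a * (r * (2 * n - w) / (2 * a)) := by field_simp
  rw [envelope_quartic_eq hr.ne' hx hd] at hzx
  have hden : (4 * a * |x|) ^ 2 = (4 * a * x) ^ 2 := by
    rw [mul_pow _ |x|, sq_abs x, ← mul_pow]
  refine ⟨a, r * w / (2 * a), (x ^ 2 + (r ^ 2 - s ^ 2) * w ^ 2) / (4 * a * |x|),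
    r * (2 * n - w) / (2 * a), |z| / (4 * a * |x|), ha, by positivity, by positivity,
    by positivity, by positivity, ?_, ?_, ?_⟩
  · rw [div_pow (x ^ 2 + _), envelope_sq_eq hr.ne' hx hb, hden,
      mul_div_cancel_left₀ _ (by positivity)]
  · rw [div_pow |z|, sq_abs z, hzx, hden, mul_div_cancel_left₀ _ (by positivity)]
  · field_simp
    ring

end Envelopes

theorem stmt_3_general {r s : ℚ} (n : ℚ) (hsr : |s| < r) :
    (∃ a b c d e, IsRationalEnvelope r s n a b c d e) ↔
      ∃ w x y z, IsEnvelopePoint r s n w x y z := by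
  constructor
  · rintro ⟨a, b, c, d, e, h⟩
    obtain ⟨a', b', c', d', e', hle, h'⟩ := h.exists_le hsr
    exact h'.exists_isEnvelopePoint hsr hle
  · rintro ⟨w, x, y, z, h⟩
    exact h.exists_isRationalEnvelope hsr

theorem stmt_3 (r s : ℤ) (hrs : IsCoprime r s) (hs : 0 ≤ s) (hsr : s < r)
    (n : ℕ) (hn : 0 < n) :
    (∃ a b c d e : ℚ, IsEnvelope r s n a b c d e) ↔
    ∃ w x y z : ℚ, 0 < w ∧ w ≤ (n : ℚ) ∧ y ≠ 0 ∧
      y ^ 2 = x * (x + ((r : ℚ) + (s : ℚ)) * w) * (x - ((r : ℚ) - (s : ℚ)) * w) ∧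
      z ^ 2 = (x ^ 2 + 2 * (s : ℚ) * ((2 * (n : ℚ) - w) + w) * x -
          ((r : ℚ) ^ 2 - (s : ℚ) ^ 2) * w ^ 2) ^ 2 +
        4 * ((r : ℚ) ^ 2 - (s : ℚ) ^ 2) * (2 * (n : ℚ) - w) ^ 2 * x ^ 2 :=
  stmt_3_general n (by exact_mod_cast (abs_of_nonneg hs).trans_lt hsr)
end
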